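/- Let R be an integral domain and {X_α} a (possibly infinite) family of independent indeterminates over R. If the polynomial ring R[{X_α}] is v-coherent, then R is v-coherent. -/

import Mathlib

/-!
Write `S = R[{X_α}]`, and let `I` be a nonzero finitely generated ideal of `R`. By hypothesis
`(IS)⁻¹ = J_v` with `J` finitely generated over `S`. Fix `0 ≠ a ∈ I`. Since `J ⊆ (IS)⁻¹`, each
generator of `J` has the form `g / a` with `g ∈ S`; let `J'` be the `R`-submodule of `Frac R`
generated by the finitely many elements `c / a`, for `c` a coefficient of one of the `g`. Then
`I⁻¹ = J'_v`.

The point is that a scalar `z ∈ Frac R` sends a polynomial into `S` iff it sends each of its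
coefficients into `R` (`fracC_mul_mem_one_iff`). Hence `z ∈ J'⁻¹` iff `z ∈ J⁻¹` for scalars `z`.
As `I ⊆ J⁻¹`, this gives `I ⊆ J'⁻¹`, that is, `J'_v ⊆ I⁻¹`. Conversely, for `y ∈ I⁻¹` and
`z ∈ J'⁻¹` one has `y ∈ (IS)⁻¹ = J_v` and `z ∈ J⁻¹`, so `yz ∈ S ∩ Frac R = R`, whence `y ∈ J'_v`.
-/

/-
Definitions following S. Gabelli, E. Houston, T. G. Lucas,
"The t#-property for integral domains".

All the star-operation notions (`v`, `t`, maximal `t`-ideals, etc.) are defined for a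
commutative ring `R` via its total quotient field `FractionRing R`; in all theorems `R`
is assumed to be an integral domain, so `FractionRing R` is its quotient field `K`.
-/

noncomputable section

namespace TSharpPaper

variable (R : Type*) [CommRing R]

/-- The image of an integral ideal in the quotient field, as an `R`-submodule. -/
def idealSub (I : Ideal R) : Submodule R (FractionRing R) :=
  Submodule.map (Algebra.linearMap R (FractionRing R)) I

/-- The divisorial closure `I_v = (I⁻¹)⁻¹` of an integral ideal, as an integral ideal.
Here for a submodule `J` of `K`, `1 / J = {x ∈ K : xJ ⊆ R}` is `J⁻¹`. -/
def vIdeal (I : Ideal R) : Ideal R :=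
  Submodule.comap (Algebra.linearMap R (FractionRing R))
    ((1 : Submodule R (FractionRing R)) / (1 / idealSub R I))

/-- The `t`-closure `I_t = ⋃ J_v`, the union over all nonzero finitely generated
subideals `J` of `I`. -/
def tIdeal (I : Ideal R) : Ideal R :=
  ⨆ (J : Ideal R) (_ : J.FG) (_ : J ≠ ⊥) (_ : J ≤ I), vIdeal R J

/-- A (nonzero) integral ideal is divisorial if `I = I_v`. -/
def IsDivisorialIdeal (I : Ideal R) : Prop := I ≠ ⊥ ∧ vIdeal R I = I

/-- A (nonzero) integral ideal is a `t`-ideal if `I = I_t`. -/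
def IsTIdeal (I : Ideal R) : Prop := I ≠ ⊥ ∧ tIdeal R I = I

/-- A `t`-prime is a prime `t`-ideal. -/
def IsTPrime (P : Ideal R) : Prop := P.IsPrime ∧ IsTIdeal R P

/-- The set `t-Max(R)` of maximal `t`-ideals: integral ideals maximal among proper
integral `t`-ideals. -/
def tMax : Set (Ideal R) :=
  {M | IsTIdeal R M ∧ M ≠ ⊤ ∧ ∀ J : Ideal R, IsTIdeal R J → J ≠ ⊤ → M ≤ J → J = M}

/-- The localization `R_P` of `R` at (the complement of) a prime `P`, viewed as a subset
of the quotient field. -/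
def locSet (P : Ideal R) : Set (FractionRing R) :=
  {x | ∃ r s : R, s ∉ P ∧ x * algebraMap R (FractionRing R) s = algebraMap R (FractionRing R) r}

/-- The image of `R` in its quotient field. -/
def imageR : Set (FractionRing R) := Set.range (algebraMap R (FractionRing R))

/-- `R` is a `t#`-domain if `⋂_{M ∈ 𝔐₁} R_M ≠ ⋂_{M ∈ 𝔐₂} R_M` for any two distinct
subsets `𝔐₁, 𝔐₂` of `t-Max(R)`. -/
def IsTSharp : Prop :=
  ∀ 𝔐₁ 𝔐₂ : Set (Ideal R), 𝔐₁ ⊆ tMax R → 𝔐₂ ⊆ tMax R → 𝔐₁ ≠ 𝔐₂ →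
    (⋂ M ∈ 𝔐₁, locSet R M) ≠ ⋂ M ∈ 𝔐₂, locSet R M

/-- The conductor `(R :_R u) = {r ∈ R : r·u ∈ R}` of an element `u` of the quotient
field. -/
def colonIdeal (u : FractionRing R) : Ideal R :=
  Submodule.comap (Algebra.linearMap R (FractionRing R))
    (Submodule.comap (LinearMap.mulLeft R u) (1 : Submodule R (FractionRing R)))

/-- `R` is `v`-coherent if for each nonzero finitely generated ideal `I` of `R`,
`I⁻¹ = J_v` for some finitely generated fractional ideal `J`. -/
def IsVCoherent : Prop :=
  ∀ I : Ideal R, I ≠ ⊥ → I.FG →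
    ∃ J : Submodule R (FractionRing R), J.FG ∧
      (1 : Submodule R (FractionRing R)) / idealSub R I = 1 / (1 / J)

/-- An ideal is `v`-finite if it equals `J_v` for some finitely generated ideal `J`. -/
def IsVFinite (I : Ideal R) : Prop := ∃ J : Ideal R, J.FG ∧ I = vIdeal R J

/-- `Φ(Λ)`: the set of all integral `t`-ideals `I` of `R` with `I ⊄ P` for every
`P ∈ Λ`. -/
def Phi (Λ : Set (Ideal R)) : Set (Ideal R) :=
  {I | IsTIdeal R I ∧ ∀ P ∈ Λ, ¬ I ≤ P}

/-- `Φ(Λ)` is `v`-finite if every `t`-ideal in `Φ(Λ)` contains a `v`-finite `t`-ideal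
belonging to `Φ(Λ)`. -/
def PhiVFinite (Λ : Set (Ideal R)) : Prop :=
  ∀ I ∈ Phi R Λ, ∃ J ∈ Phi R Λ, J ≤ I ∧ IsVFinite R J

/-- The generalized ring of quotients `R_{Φ(Λ)} = {x ∈ K : xI ⊆ R for some I ∈ Φ(Λ)}`. -/
def RPhi (Λ : Set (Ideal R)) : Set (FractionRing R) :=
  {x | ∃ I ∈ Phi R Λ, ∀ a ∈ I, x * algebraMap R (FractionRing R) a ∈ imageR R}

/-- `Λ` is a set of pairwise incomparable `t`-primes of `R`. -/
def IncompTPrimes (Λ : Set (Ideal R)) : Prop :=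
  (∀ P ∈ Λ, IsTPrime R P) ∧ ∀ P ∈ Λ, ∀ Q ∈ Λ, P ≤ Q → P = Q

/-- `R` is a Prüfer `v`-multiplication domain if `R_M` is a valuation domain for every
maximal `t`-ideal `M` of `R`. -/
def IsPVMD [IsDomain R] : Prop :=
  ∀ M ∈ tMax R, ∀ x : FractionRing R, x ≠ 0 → x ∈ locSet R M ∨ x⁻¹ ∈ locSet R M

/-- `R` is a Mori domain: the ascending chain condition holds on integral divisorial
ideals. -/
def IsMori : Prop :=
  ∀ f : ℕ → Ideal R, (∀ n, IsDivisorialIdeal R (f n)) → (∀ n, f n ≤ f (n + 1)) →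
    ∃ n, ∀ m, n ≤ m → f m = f n

/-- The localization `T_Q` of a subring `T` of the quotient field of `R` at (the
complement of) an ideal `Q` of `T`, viewed as a subset of the quotient field of `R`. -/
def locSetSub (T : Subring (FractionRing R)) (Q : Ideal T) : Set (FractionRing R) :=
  {x | ∃ r s : T, s ∉ Q ∧ x * (s : FractionRing R) = (r : FractionRing R)}

/-- `T` is an overring of `R`: a subring of the quotient field containing (the image
of) `R`. -/
def IsOverring (T : Subring (FractionRing R)) : Prop :=
  ∀ r : R, algebraMap R (FractionRing R) r ∈ T

/-- The canonical ring homomorphism from `R` to an overring `T`; `M ∩ R` is the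
contraction `Ideal.comap (intoOverring R T h) M`. -/
def intoOverring (T : Subring (FractionRing R)) (h : IsOverring R T) : R →+* T :=
  (algebraMap R (FractionRing R)).codRestrict T h

/-- `T` is a `t`-flat overring of `R`: `T_M = R_{M ∩ R}` for each maximal `t`-ideal `M`
of `T`. -/
def IsTFlat (T : Subring (FractionRing R)) : Prop :=
  ∃ h : IsOverring R T, ∀ M ∈ tMax (↥T),
    locSetSub R T M = locSet R (Ideal.comap (intoOverring R T h) M)

/-- `T` is `t`-linked over `R`: for each nonzero finitely generated ideal `I` of `R` with
`(R : I) = R` one has `(T : IT) = T`. -/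
def IsTLinked (T : Subring (FractionRing R)) : Prop :=
  ∀ I : Ideal R, I ≠ ⊥ → I.FG →
    (1 : Submodule R (FractionRing R)) / idealSub R I = 1 →
    {x : FractionRing R | ∀ a ∈ I, x * algebraMap R (FractionRing R) a ∈ T} =
      (T : Set (FractionRing R))

/-- `T` is a `t`-subintersection of `R`: `T = ⋂_{P ∈ Λ} R_P` for some set `Λ` of
`t`-primes of `R`. -/
def IsTSubintersection (T : Subring (FractionRing R)) : Prop :=
  ∃ Λ : Set (Ideal R), (∀ P ∈ Λ, IsTPrime R P) ∧
    (T : Set (FractionRing R)) = ⋂ P ∈ Λ, locSet R P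

/-- `(P : P) = {x ∈ K : xP ⊆ P}`, as a subring of the quotient field of `R`. -/
def colonPP (P : Ideal R) : Subring (FractionRing R) where
  carrier := {x | ∀ a ∈ P, x * algebraMap R (FractionRing R) a ∈ idealSub R P}
  one_mem' := by
    intro a ha
    rw [one_mul]
    exact Submodule.mem_map_of_mem ha
  mul_mem' := by
    intro x y hx hy a ha
    rcases hy a ha with ⟨b, hb, hby⟩
    rw [mul_assoc, ← hby]
    exact hx b hb
  add_mem' := by
    intro x y hx hy a ha
    rw [add_mul]
    exact Submodule.add_mem _ (hx a ha) (hy a ha)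
  zero_mem' := by
    intro a ha
    rw [zero_mul]
    exact Submodule.zero_mem _
  neg_mem' := by
    intro x hx a ha
    rw [neg_mul]
    exact Submodule.neg_mem _ (hx a ha)

/-- `R` is a `t#_P`-domain: for sets `Λ₁ ≠ Λ₂` of `t`-primes such that `(P + Q)_t = R`
for distinct `P ∈ Λ₁`, `Q ∈ Λ₂`, one has `R_{Φ(Λ₁)} ≠ R_{Φ(Λ₂)}`. -/
def IsTSharpP : Prop :=
  ∀ Λ₁ Λ₂ : Set (Ideal R), (∀ P ∈ Λ₁, IsTPrime R P) → (∀ Q ∈ Λ₂, IsTPrime R Q) →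
    (∀ P ∈ Λ₁, ∀ Q ∈ Λ₂, P ≠ Q → tIdeal R (P ⊔ Q) = ⊤) →
    Λ₁ ≠ Λ₂ → RPhi R Λ₁ ≠ RPhi R Λ₂

/-- A `t`-localizing system of ideals of `R`: a set of integral `t`-ideals closed under
`t`-multiplication and satisfying the two localizing-system closure properties. -/
def IsTLocalizingSystem (Φ : Set (Ideal R)) : Prop :=
  (∀ I ∈ Φ, IsTIdeal R I) ∧
  (∀ I ∈ Φ, ∀ J ∈ Φ, tIdeal R (I * J) ∈ Φ) ∧
  (∀ I ∈ Φ, ∀ J : Ideal R, IsTIdeal R J → I ≤ J → J ∈ Φ) ∧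
  (∀ I ∈ Φ, ∀ J : Ideal R, IsTIdeal R J →
    (∀ a ∈ I, tIdeal R (Submodule.colon J (Ideal.span {a})) ∈ Φ) → J ∈ Φ)

/-- The ascending chain condition on `t`-primes of `R`. -/
def ACCTPrimes : Prop :=
  ∀ f : ℕ → Ideal R, (∀ n, IsTPrime R (f n)) → (∀ n, f n ≤ f (n + 1)) →
    ∃ n, ∀ m, n ≤ m → f m = f n

/-- The ascending chain condition on radical `t`-ideals of `R`. -/
def ACCRadicalTIdeals : Prop :=
  ∀ f : ℕ → Ideal R, (∀ n, IsTIdeal R (f n) ∧ (f n).radical = f n) →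
    (∀ n, f n ≤ f (n + 1)) → ∃ n, ∀ m, n ≤ m → f m = f n

/-- A prime `P` is branched if there is a `PR_P`-primary ideal of `R_P` different from
`PR_P` (the maximal ideal of `R_P`). -/
def IsBranched (P : Ideal R) (hP : P.IsPrime) : Prop :=
  letI := hP
  ∃ Q : Ideal (Localization.AtPrime P), Q.IsPrimary ∧
    Q ≠ IsLocalRing.maximalIdeal (Localization.AtPrime P)

/-- A prime ideal of a domain has height one. -/
def HeightOne (Q : Ideal R) : Prop :=
  Q ≠ ⊥ ∧ ∀ P : Ideal R, P.IsPrime → P < Q → P = ⊥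

/-- A nonzero integral ideal `I` is `t`-invertible: `(I I⁻¹)_t = R`. -/
def IsTInvertible (I : Ideal R) : Prop :=
  tIdeal R (Submodule.comap (Algebra.linearMap R (FractionRing R))
    (idealSub R I * ((1 : Submodule R (FractionRing R)) / idealSub R I))) = ⊤

variable {σ : Type*}

/-- An upper to zero: a prime ideal `Q` of `R[{X_α}]` with `Q ∩ R = 0`. -/
def IsUpperToZero (Q : Ideal (MvPolynomial σ R)) : Prop :=
  Q.IsPrime ∧ Ideal.comap (MvPolynomial.C : R →+* MvPolynomial σ R) Q = ⊥

/-- The content `c(f)` of a polynomial: the ideal of `R` generated by its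
coefficients. -/
def mvContent (f : MvPolynomial σ R) : Ideal R :=
  Ideal.span (Set.range fun m => MvPolynomial.coeff m f)

/-- The content `c(I)` of an ideal of `R[{X_α}]`: the ideal of `R` generated by the
coefficients of all polynomials in `I`. -/
def mvContentIdeal (Q : Ideal (MvPolynomial σ R)) : Ideal R :=
  Ideal.span {r | ∃ f ∈ Q, ∃ m, MvPolynomial.coeff m f = r}

/-- `R({X_α})`: the localization of `R[{X_α}]` at the (multiplicatively closed) set of
polynomials of unit content. -/
def mvNagata (σ : Type*) : Type _ :=
  Localization (Submonoid.closure {f : MvPolynomial σ R | mvContent R f = ⊤})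

instance (σ : Type*) : CommRing (mvNagata R σ) := by
  unfold mvNagata; infer_instance

/-- `R⟨{X_α}⟩`: the localization of `R[{X_α}]` at the (multiplicatively closed) set
`S = {f : c(f)_v = R}`. -/
def mvKronecker (σ : Type*) : Type _ :=
  Localization (Submonoid.closure {f : MvPolynomial σ R | vIdeal R (mvContent R f) = ⊤})

instance (σ : Type*) : CommRing (mvKronecker R σ) := by
  unfold mvKronecker; infer_instance


/-- The embedding `Frac R → Frac R[{X_α}]` induced by the constant embedding `C`. -/
def fracC (R : Type*) [CommRing R] [IsDomain R] (σ : Type*) :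
    FractionRing R →+* FractionRing (MvPolynomial σ R) :=
  IsFractionRing.map (A := R) (B := MvPolynomial σ R) (j := MvPolynomial.C)
    (MvPolynomial.C_injective σ R)

lemma fracC_algebraMap (R : Type*) [CommRing R] [IsDomain R] (σ : Type*) (r : R) :
    fracC R σ (algebraMap R (FractionRing R) r) =
      algebraMap (MvPolynomial σ R) (FractionRing (MvPolynomial σ R)) (MvPolynomial.C r) := by
  unfold fracC IsFractionRing.map
  exact IsLocalization.map_eq _ r

/-- A scalar `z` of the quotient field sends a polynomial `g` into `R[{X_α}]` exactly when it
sends every coefficient of `g` into `R`. -/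
lemma fracC_mul_mem_one_iff {R : Type*} [CommRing R] [IsDomain R] {σ : Type*}
    (z : FractionRing R) (g : MvPolynomial σ R) :
    fracC R σ z * algebraMap (MvPolynomial σ R) (FractionRing (MvPolynomial σ R)) g ∈
        (1 : Submodule (MvPolynomial σ R) (FractionRing (MvPolynomial σ R))) ↔
      ∀ m, z * algebraMap R (FractionRing R) (MvPolynomial.coeff m g) ∈
        (1 : Submodule R (FractionRing R)) := by
  obtain ⟨p, q, hq, rfl⟩ := IsFractionRing.div_surjective (A := R) z
  have hq0 : q ≠ 0 := nonZeroDivisors.ne_zero hq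
  have hqK : algebraMap R (FractionRing R) q ≠ 0 := by
    simpa using hq0
  have hqL : algebraMap (MvPolynomial σ R) (FractionRing (MvPolynomial σ R))
      (MvPolynomial.C q) ≠ 0 := by
    simpa using hq0
  have hL : fracC R σ (algebraMap R (FractionRing R) p / algebraMap R (FractionRing R) q) *
        algebraMap (MvPolynomial σ R) (FractionRing (MvPolynomial σ R)) g ∈
        (1 : Submodule (MvPolynomial σ R) (FractionRing (MvPolynomial σ R))) ↔
      MvPolynomial.C q ∣ MvPolynomial.C p * g := by
    rw [map_div₀, fracC_algebraMap, fracC_algebraMap, Submodule.mem_one]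
    refine exists_congr fun h => ?_
    rw [div_mul_eq_mul_div, eq_div_iff hqL, ← map_mul, ← map_mul,
      (IsFractionRing.injective (MvPolynomial σ R) (FractionRing (MvPolynomial σ R))).eq_iff,
      mul_comm h, eq_comm]
  have hK : ∀ c : R, algebraMap R (FractionRing R) p / algebraMap R (FractionRing R) q *
      algebraMap R (FractionRing R) c ∈ (1 : Submodule R (FractionRing R)) ↔ q ∣ p * c := by
    intro c
    rw [Submodule.mem_one]
    refine exists_congr fun h => ?_
    rw [div_mul_eq_mul_div, eq_div_iff hqK, ← map_mul, ← map_mul,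
      (IsFractionRing.injective R (FractionRing R)).eq_iff, mul_comm h, eq_comm]
  simp only [hL, hK, MvPolynomial.C_dvd_iff_dvd_coeff, MvPolynomial.coeff_C_mul]

lemma mem_one_div_span {A L : Type*} [CommRing A] [Field L] [Algebra A L] (s : Set L) (x : L) :
    x ∈ (1 : Submodule A L) / Submodule.span A s ↔
      ∀ y ∈ s, x * y ∈ (1 : Submodule A L) := by
  rw [Submodule.mem_div_iff_forall_mul_mem]
  refine ⟨fun h y hy => h y (Submodule.subset_span hy), fun h y hy => ?_⟩
  have hle : Submodule.span A s ≤ (1 : Submodule A L).comap (LinearMap.mulLeft A x) :=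
    Submodule.span_le.2 h
  exact hle hy

lemma mem_one_div_idealSub {A : Type*} [CommRing A] (I : Ideal A) (x : FractionRing A) :
    x ∈ (1 : Submodule A (FractionRing A)) / idealSub A I ↔
      ∀ b ∈ I, x * algebraMap A (FractionRing A) b ∈ (1 : Submodule A (FractionRing A)) := by
  rw [Submodule.mem_div_iff_forall_mul_mem]
  simp [idealSub]

lemma mem_one_div_idealSub_map {R : Type*} [CommRing R] [IsDomain R] {σ : Type*} (I : Ideal R)
    (x : FractionRing (MvPolynomial σ R)) :
    x ∈ (1 : Submodule (MvPolynomial σ R) (FractionRing (MvPolynomial σ R))) /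
        idealSub (MvPolynomial σ R) (I.map MvPolynomial.C) ↔
      ∀ b ∈ I, x * algebraMap (MvPolynomial σ R) (FractionRing (MvPolynomial σ R))
        (MvPolynomial.C b) ∈
          (1 : Submodule (MvPolynomial σ R) (FractionRing (MvPolynomial σ R))) := by
  rw [idealSub, Ideal.map, Ideal.span, Submodule.map_span, mem_one_div_span]
  simp

/-- **Proposition (3.7).**  If the polynomial ring `R[{X_α}]` is `v`-coherent, then so
is `R`. -/
theorem vCoherent_of_polynomial_vCoherent (R : Type*) [CommRing R] [IsDomain R]
    (σ : Type*) (h : IsVCoherent (MvPolynomial σ R)) : IsVCoherent R := by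
  intro I hI hfg
  have hmap : I.map (MvPolynomial.C : R →+* MvPolynomial σ R) ≠ ⊥ := by
    rwa [Ne, Ideal.map_eq_bot_iff_of_injective (MvPolynomial.C_injective σ R)]
  obtain ⟨J, ⟨s, rfl⟩, hJ⟩ := h _ hmap (hfg.map _)
  obtain ⟨a, haI, ha0⟩ := Submodule.exists_mem_ne_zero_of_ne_bot hI
  have haK : algebraMap R (FractionRing R) a ≠ 0 := by simpa using ha0
  have haL : algebraMap (MvPolynomial σ R) (FractionRing (MvPolynomial σ R))
      (MvPolynomial.C a) ≠ 0 := by simpa using ha0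
  have hs : ∀ f ∈ s, ∀ b ∈ I,
      f * algebraMap (MvPolynomial σ R) (FractionRing (MvPolynomial σ R)) (MvPolynomial.C b) ∈
        (1 : Submodule (MvPolynomial σ R) (FractionRing (MvPolynomial σ R))) := by
    intro f hf
    rw [← mem_one_div_idealSub_map, hJ, Submodule.mem_div_iff_forall_mul_mem]
    intro y hy
    rw [mul_comm]
    exact (mem_one_div_span _ _).1 hy f hf
  -- Every generator `f` of `J` is `g f / a` for a polynomial `g f`.
  have hg : ∀ f, ∃ g : MvPolynomial σ R, f ∈ s →
      algebraMap (MvPolynomial σ R) (FractionRing (MvPolynomial σ R)) g =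
        f * algebraMap (MvPolynomial σ R) (FractionRing (MvPolynomial σ R))
          (MvPolynomial.C a) := by
    intro f
    by_cases hf : f ∈ s
    · obtain ⟨g, hg⟩ := Submodule.mem_one.1 (hs f hf a haI)
      exact ⟨g, fun _ => hg⟩
    · exact ⟨0, fun h => absurd h hf⟩
  choose g hg using hg
  -- The product of `f = g f / a` with a scalar `z` is `(z / a) * g f`.
  have key : ∀ (z : FractionRing R), ∀ f ∈ s,
      (fracC R σ z * f ∈
        (1 : Submodule (MvPolynomial σ R) (FractionRing (MvPolynomial σ R))) ↔
      ∀ m, z * (algebraMap R (FractionRing R) (MvPolynomial.coeff m (g f)) /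
        algebraMap R (FractionRing R) a) ∈ (1 : Submodule R (FractionRing R))) := by
    intro z f hf
    have h1 := fracC_mul_mem_one_iff (z / algebraMap R (FractionRing R) a) (g f)
    rw [hg f hf, map_div₀, fracC_algebraMap, mul_comm f, ← mul_assoc,
      div_mul_cancel₀ _ haL] at h1
    rw [h1]
    refine forall_congr' fun m => ?_
    rw [div_mul_eq_mul_div, mul_div_assoc]
  let T : Set (FractionRing R) := ⋃ f ∈ s, (fun m => algebraMap R (FractionRing R)
    (MvPolynomial.coeff m (g f)) / algebraMap R (FractionRing R) a) '' ((g f).support : Set _)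
  have hT : T.Finite :=
    s.finite_toSet.biUnion fun f _ => (g f).support.finite_toSet.image _
  have hmemT : ∀ z : FractionRing R,
      z ∈ (1 : Submodule R (FractionRing R)) / Submodule.span R T ↔
      ∀ f ∈ s, fracC R σ z * f ∈
        (1 : Submodule (MvPolynomial σ R) (FractionRing (MvPolynomial σ R))) := by
    intro z
    rw [mem_one_div_span]
    constructor
    · intro hz f hf
      rw [key z f hf]
      intro m
      by_cases hm : m ∈ (g f).support
      · exact hz _ (Set.mem_biUnion hf ⟨m, hm, rfl⟩)
      · rw [MvPolynomial.notMem_support_iff.1 hm]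
        simp
    · intro hz y hy
      obtain ⟨f, hf, m, -, rfl⟩ := Set.mem_iUnion₂.1 hy
      exact (key z f hf).1 (hz f hf) m
  refine ⟨Submodule.span R T, Submodule.fg_span hT, le_antisymm ?_ ?_⟩
  · intro y hy
    rw [Submodule.mem_div_iff_forall_mul_mem]
    intro z hz
    have hyL : fracC R σ y ∈
        (1 : Submodule (MvPolynomial σ R) (FractionRing (MvPolynomial σ R))) /
          idealSub (MvPolynomial σ R) (I.map MvPolynomial.C) := by
      rw [mem_one_div_idealSub_map]
      intro b hb
      rw [fracC_mul_mem_one_iff]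
      intro m
      classical
      rw [MvPolynomial.coeff_C]
      split_ifs
      · exact (mem_one_div_idealSub I y).1 hy b hb
      · simp
    have hzL : fracC R σ z ∈
        (1 : Submodule (MvPolynomial σ R) (FractionRing (MvPolynomial σ R))) /
          Submodule.span (MvPolynomial σ R) s :=
      (mem_one_div_span _ _).2 ((hmemT z).1 hz)
    rw [hJ, Submodule.mem_div_iff_forall_mul_mem] at hyL
    -- `y * z` lies in `R[{X_α}]`; being a scalar, it lies in `R`.
    have h1 := (fracC_mul_mem_one_iff (y * z) (1 : MvPolynomial σ R)).1
      (by simpa using hyL _ hzL) 0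
    simpa using h1
  · intro y hy
    rw [mem_one_div_idealSub]
    intro b hb
    rw [Submodule.mem_div_iff_forall_mul_mem] at hy
    refine hy _ ((hmemT _).2 fun f hf => ?_)
    rw [fracC_algebraMap, mul_comm]
    exact hs f hf b hb

end TSharpPaper
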